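/- The set M⁻ of pairs (A,B) of 2×2 complex matrices with B symmetric and det [[A, conj(B)],[B, conj(A)]] < 0 is path-connected. -/

import Mathlib

open Matrix ComplexOrder

open scoped ComplexConjugate

/-!
If `B` is invertible and `A = N B`, the determinant factors as `det (N N̄ - 1) |det B|²`, so only
`N` matters. The characteristic polynomial `x² - t x + d` of `N N̄` is real with `d = |det N|² ≥ 0`;
being negative at `1`, it has roots `a² > 1 > b² ≥ 0`. Eigenvectors of `N N̄` for these roots yield
con-eigenvectors of `N`, so `N = W diag(a, b) W̄⁻¹`; conversely every such `N` has
`det (N N̄ - 1) = (a² - 1)(b² - 1) < 0`. The parameters `W`, `(a, b)` and `B` range over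
path-connected sets. A point with `B` singular is joined to this generic part by a short segment,
because the determinant is real and continuous, hence its negativity is an open condition.
-/

section Determinant

variable {n R K : Type*} [Fintype n] [DecidableEq n]

lemma det_fromBlocks_one₁₂_one₂₁ [CommRing R] (N M : Matrix n n R) :
    (fromBlocks N 1 1 M).det = (N * M - 1).det := by
  have factor : fromBlocks N 1 1 M =
      fromBlocks 1 (N - 1) 0 1 * fromBlocks 1 (1 + M - N * M) 1 M := by
    rw [fromBlocks_multiply]
    congr 1 <;> noncomm_ring
  rw [factor, det_mul, det_fromBlocks_one₁₁, det_fromBlocks_one₁₁,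
    Matrix.zero_mul, sub_zero, det_one, one_mul]
  congr 1
  noncomm_ring

lemma finite_setOf_det_lineMap_eq_zero [Field K] (A : Matrix n n K) {B : Matrix n n K}
    (hB : B.det ≠ 0) : {t : K | (AffineMap.lineMap A B t : Matrix n n K).det = 0}.Finite := by
  let p : Polynomial K :=
    (A.map Polynomial.C + (Polynomial.X : Polynomial K) • (B - A).map Polynomial.C).det
  have eval_p (t : K) : p.eval t = (AffineMap.lineMap A B t : Matrix n n K).det := by
    rw [← Polynomial.coe_evalRingHom, RingHom.map_det]
    congr 1
    ext i j
    simp [AffineMap.lineMap_apply_module', add_comm]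
  have p_ne_zero : p ≠ 0 := fun hp ↦ hB <| by simpa [hp] using (eval_p 1).symm
  simpa only [Polynomial.IsRoot.def, eval_p] using Polynomial.finite_setOfPred_isRoot p_ne_zero

lemma isPathConnected_submodule_det_ne_zero {V : Submodule ℂ (Matrix n n ℂ)}
    (hV : ∃ U ∈ V, U.det ≠ 0) : IsPathConnected {U | U ∈ V ∧ U.det ≠ 0} := by
  refine isPathConnected_iff.2 ⟨hV, fun A ⟨hAV, hA⟩ B ⟨hBV, hB⟩ ↦ ?_⟩
  have path_nonroots := (finite_setOf_det_lineMap_eq_zero A hB).countable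
    |>.isPathConnected_compl_of_one_lt_rank (by simp [Complex.rank_real_complex])
  have joined := (path_nonroots.joinedIn 0 (by simpa using hA) 1 (by simpa using hB)).map
    (f := AffineMap.lineMap A B) (by fun_prop)
  rw [AffineMap.lineMap_apply_zero, AffineMap.lineMap_apply_one] at joined
  exact joined.mono <| Set.image_subset_iff.2 fun t ht ↦
    ⟨AffineMap.lineMap_mem (Q := V.toAffineSubspace) t hAV hBV, ht⟩

lemma isPathConnected_det_ne_zero : IsPathConnected {U : Matrix n n ℂ | U.det ≠ 0} := by
  simpa using isPathConnected_submodule_det_ne_zero (V := (⊤ : Submodule ℂ (Matrix n n ℂ)))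
    ⟨1, trivial, by simp⟩

end Determinant

section Consimilarity

variable {n : Type*} [Fintype n] {N : Matrix n n ℂ} {c : ℝ} {w : n → ℂ}

lemma map_conj_mulVec_star (N : Matrix n n ℂ) (v : n → ℂ) :
    N.map conj *ᵥ star v = star (N *ᵥ v) :=
  funext fun i ↦ (RingHom.map_mulVec (starRingEnd ℂ) N v i).symm

/-- `w` is a con-eigenvector of `N`, that is, an eigenvector of the antilinear map `v ↦ N v̄`. Only
real con-eigenvalues `c` are considered: rescaling `w` by a phase makes any con-eigenvalue real. -/
def IsConeigenvector (N : Matrix n n ℂ) (c : ℝ) (w : n → ℂ) : Prop :=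
  w ≠ 0 ∧ N *ᵥ star w = c • w

lemma IsConeigenvector.mul_map_conj_mulVec (hw : IsConeigenvector N c w) :
    (N * N.map conj) *ᵥ w = (c ^ 2) • w := by
  calc (N * N.map conj) *ᵥ w = N *ᵥ star (N *ᵥ star w) := by
        rw [← map_conj_mulVec_star, star_star, mulVec_mulVec]
    _ = (c ^ 2) • w := by
        rw [hw.2, star_smul, star_trivial, mulVec_smul, hw.2, smul_smul, sq]

/- With `T v = N v̄` we have `T² v = c² v`, so `T v + c v` satisfies `T w = c w`. If it vanishes,
then `T v = -c v`, and antilinearity turns this into `T (i v) = c (i v)`. -/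
lemma exists_isConeigenvector {v : n → ℂ} (hv : v ≠ 0)
    (h : (N * N.map conj) *ᵥ v = (c ^ 2) • v) : ∃ w, IsConeigenvector N c w := by
  by_cases hw : N *ᵥ star v + c • v = 0
  · refine ⟨Complex.I • v, smul_ne_zero Complex.I_ne_zero hv, ?_⟩
    rw [star_smul, mulVec_smul, eq_neg_of_add_eq_zero_left hw, Complex.star_def, Complex.conj_I,
      neg_smul_neg, smul_comm]
  · refine ⟨_, hw, ?_⟩
    calc N *ᵥ star (N *ᵥ star v + c • v) = (N * N.map conj) *ᵥ v + c • N *ᵥ star v := by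
          rw [star_add, star_smul, mulVec_add, mulVec_smul, ← map_conj_mulVec_star,
            star_star, mulVec_mulVec, star_trivial c]
      _ = c • (N *ᵥ star v + c • v) := by rw [h, smul_add, smul_smul, sq, add_comm]

lemma exists_trace_mul_map_conj_eq_ofReal (N : Matrix n n ℂ) :
    ∃ t : ℝ, (N * N.map conj).trace = t := by
  refine Complex.conj_eq_iff_real.1 ?_
  rw [AddMonoidHom.map_trace, trace_mul_comm]
  simp [Matrix.map_mul, Matrix.map_map, Function.comp_def]

variable [DecidableEq n] {W : Matrix n n ℂ} {d : n → ℝ}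

lemma isUnit_det_map_conj (hW : W.det ≠ 0) : IsUnit (W.map conj).det := by
  simpa [← RingHom.mapMatrix_apply, ← RingHom.map_det] using hW

lemma continuousOn_mul_diagonal_mul_inv_map_conj :
    ContinuousOn (fun q : Matrix n n ℂ × (n → ℝ) ↦
      q.1 * diagonal (fun i ↦ (q.2 i : ℂ)) * (q.1.map conj)⁻¹) {q | q.1.det ≠ 0} := by
  intro q hq
  have inv_continuousAt : ContinuousAt Inv.inv (q.1.map conj) :=
    continuousAt_matrix_inv _ <| by
      rw [Ring.inverse_eq_inv']
      exact continuousAt_inv₀ (isUnit_det_map_conj hq).ne_zero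
  have conj_continuous : Continuous fun q : Matrix n n ℂ × (n → ℝ) ↦ q.1.map conj :=
    continuous_fst.matrix_map Complex.continuous_conj
  have diagonal_continuous :
      Continuous fun q : Matrix n n ℂ × (n → ℝ) ↦ diagonal fun i ↦ (q.2 i : ℂ) :=
    Continuous.matrix_diagonal (by fun_prop)
  exact ((continuous_fst.mul diagonal_continuous).continuousAt.mul
    (inv_continuousAt.comp (x := q) conj_continuous.continuousAt)).continuousWithinAt

lemma exists_mul_map_conj_eq_mul_diagonal (hd : Function.Injective fun i ↦ d i ^ 2)
    (h : ∀ i, (N * N.map conj).charpoly.IsRoot ((d i ^ 2 : ℝ) : ℂ)) :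
    ∃ W : Matrix n n ℂ, W.det ≠ 0 ∧ N * W.map conj = W * diagonal fun i ↦ (d i : ℂ) := by
  have exists_w (i : n) : ∃ w, IsConeigenvector N (d i) w := by
    have hi := h i
    rw [← charpoly_toLin', ← Module.End.hasEigenvalue_iff_isRoot_charpoly] at hi
    obtain ⟨v, hv⟩ := hi.exists_hasEigenvector
    exact exists_isConeigenvector hv.2 hv.apply_eq_smul
  choose w hw using exists_w
  refine ⟨of fun i j ↦ w j i, ?_, ?_⟩
  · rw [← isUnit_iff_ne_zero, ← isUnit_iff_isUnit_det, ← linearIndependent_cols_iff_isUnit]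
    exact Module.End.eigenvectors_linearIndependent' (toLin' (N * N.map conj))
      (fun i ↦ ((d i ^ 2 : ℝ) : ℂ)) (Complex.ofReal_injective.comp hd) w fun i ↦
        Module.End.hasEigenvector_iff.2
          ⟨Module.End.mem_eigenspace_iff.2 (hw i).mul_map_conj_mulVec, (hw i).1⟩
  · ext i j
    rw [mul_diagonal, of_apply, mul_comm]
    exact congrFun (hw j).2 i

lemma det_mul_map_conj_sub_one (hW : W.det ≠ 0)
    (h : N * W.map conj = W * diagonal fun i ↦ (d i : ℂ)) :
    (N * N.map conj - 1).det = ∏ i, ((d i : ℂ) ^ 2 - 1) := by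
  have h_conj : N.map conj * W = W.map conj * diagonal fun i ↦ (d i : ℂ) := by
    simpa [Matrix.map_map, Function.comp_def, Matrix.map_mul, diagonal_map] using
      congrArg (fun X : Matrix n n ℂ ↦ X.map conj) h
  have similar : (N * N.map conj - 1) * W = W * diagonal fun i ↦ (d i : ℂ) ^ 2 - 1 := by
    rw [sub_mul, Matrix.mul_assoc, h_conj, ← Matrix.mul_assoc, h, Matrix.mul_assoc,
      diagonal_mul_diagonal, ← diagonal_sub, diagonal_one, mul_sub]
    simp only [sq, one_mul, mul_one]
  have det_similar := congrArg det similar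
  rw [det_mul, det_mul, det_diagonal, mul_comm] at det_similar
  exact mul_left_cancel₀ hW det_similar

end Consimilarity

section TwoByTwo

lemma exists_roots_separated_by_one {t d : ℝ} (hd : 0 ≤ d) (h : 1 - t + d < 0) :
    ∃ a b : ℝ, 1 < a ∧ 0 ≤ b ∧ b < 1 ∧ a + b = t ∧ a * b = d := by
  let f (x : ℝ) : ℝ := x ^ 2 - t * x + d
  have f_continuous : ContinuousOn f (Set.Icc 0 1) := by fun_prop
  have f_one : f 1 = 1 - t + d := by ring
  have f_sign_change : (0 : ℝ) ∈ Set.Icc (f 1) (f 0) :=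
    ⟨by rw [f_one]; exact h.le, by simpa [f] using hd⟩
  obtain ⟨b, ⟨hb0, hb_le⟩, hb⟩ := intermediate_value_Icc' zero_le_one f_continuous f_sign_change
  have hb1 : b < 1 := hb_le.lt_of_ne <| by
    rintro rfl
    linarith
  have hab : (t - b) * b = d := by linear_combination -hb
  refine ⟨t - b, b, ?_, hb0, hb1, by ring, hab⟩
  have factored : (1 - (t - b)) * (1 - b) < 0 := by linear_combination h + hab
  linarith [neg_of_mul_neg_left factored (sub_nonneg.2 hb1.le)]

/-- The pairs of con-eigenvalues occurring in the normal form of a `2 × 2` matrix `N` with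
`det (N N̄ - 1) < 0`: one above `1`, the other nonnegative and below `1`. -/
def separatedByOne : Set (Fin 2 → ℝ) := {c | 1 < c 0 ∧ 0 ≤ c 1 ∧ c 1 < 1}

lemma convex_separatedByOne : Convex ℝ separatedByOne :=
  ((convex_Ioi 1).is_linear_preimage (LinearMap.proj 0).isLinear).inter <|
    (convex_Ico 0 1).is_linear_preimage (LinearMap.proj 1).isLinear

variable {N W : Matrix (Fin 2) (Fin 2) ℂ}

lemma exists_isRoot_charpoly_of_det_neg (h : (N * N.map conj - 1).det < 0) :
    ∃ c ∈ separatedByOne, ∀ i, (N * N.map conj).charpoly.IsRoot ((c i ^ 2 : ℝ) : ℂ) := by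
  obtain ⟨t, trace_eq⟩ := exists_trace_mul_map_conj_eq_ofReal N
  have det_eq : (N * N.map conj).det = Complex.normSq N.det := by
    rw [det_mul, ← Complex.mul_conj, RingHom.map_det, RingHom.mapMatrix_apply]
  have det_sub_one : (N * N.map conj - 1).det = ((1 - t + Complex.normSq N.det : ℝ) : ℂ) := by
    calc (N * N.map conj - 1).det = 1 - (N * N.map conj).trace + (N * N.map conj).det := by
          generalize N * N.map conj = X
          rw [det_fin_two, det_fin_two, trace_fin_two]
          simp only [Matrix.sub_apply, one_apply_eq, one_apply_ne zero_ne_one,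
            one_apply_ne one_ne_zero]
          ring
      _ = _ := by rw [trace_eq, det_eq]; push_cast; rfl
  rw [det_sub_one] at h
  obtain ⟨a, b, ha, hb0, hb1, add_eq, mul_eq⟩ :=
    exists_roots_separated_by_one (Complex.normSq_nonneg _) (by exact_mod_cast h)
  have isRoot {x : ℝ} (hx : x = a ∨ x = b) : (N * N.map conj).charpoly.IsRoot (x : ℂ) := by
    have eval_eq : (N * N.map conj).charpoly.eval (x : ℂ) = ((x - a) * (x - b) : ℝ) := by
      rw [charpoly_fin_two, trace_eq, det_eq, ← add_eq, ← mul_eq]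
      simp only [Polynomial.eval_add, Polynomial.eval_sub, Polynomial.eval_mul,
        Polynomial.eval_pow, Polynomial.eval_X, Polynomial.eval_C]
      push_cast
      ring
    rw [Polynomial.IsRoot.def, eval_eq, Complex.ofReal_eq_zero, mul_eq_zero, sub_eq_zero,
      sub_eq_zero]
    exact hx
  refine ⟨![√a, √b], ⟨?_, Real.sqrt_nonneg b, ?_⟩, Fin.forall_fin_two.2 ⟨isRoot ?_, isRoot ?_⟩⟩
  · exact Real.lt_sqrt_of_sq_lt (by rwa [one_pow])
  · exact (Real.sqrt_lt' one_pos).2 (by rwa [one_pow])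
  · exact .inl (Real.sq_sqrt (by linarith))
  · exact .inr (Real.sq_sqrt hb0)

lemma sq_injective_of_mem_separatedByOne {c : Fin 2 → ℝ} (hc : c ∈ separatedByOne) :
    Function.Injective fun i ↦ c i ^ 2 := by
  obtain ⟨hc0, hc1, hc1'⟩ := hc
  have sq_ne : c 0 ^ 2 ≠ c 1 ^ 2 := by nlinarith
  intro i j hij
  fin_cases i <;> fin_cases j <;> simp_all [eq_comm]

lemma exists_consimilar_diagonal_of_det_neg (h : (N * N.map conj - 1).det < 0) :
    ∃ W : Matrix (Fin 2) (Fin 2) ℂ, ∃ c ∈ separatedByOne, W.det ≠ 0 ∧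
      N * W.map conj = W * diagonal fun i ↦ (c i : ℂ) := by
  obtain ⟨c, hc, isRoot⟩ := exists_isRoot_charpoly_of_det_neg h
  obtain ⟨W, hW, hNW⟩ :=
    exists_mul_map_conj_eq_mul_diagonal (sq_injective_of_mem_separatedByOne hc) isRoot
  exact ⟨W, c, hc, hW, hNW⟩

lemma det_neg_of_consimilar_diagonal {c : Fin 2 → ℝ} (hc : c ∈ separatedByOne) (hW : W.det ≠ 0)
    (h : N * W.map conj = W * diagonal fun i ↦ (c i : ℂ)) : (N * N.map conj - 1).det < 0 := by
  obtain ⟨hc0, hc1, hc1'⟩ := hc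
  rw [det_mul_map_conj_sub_one hW h, Fin.prod_univ_two]
  have prod_neg : (c 0 ^ 2 - 1) * (c 1 ^ 2 - 1) < 0 :=
    mul_neg_of_pos_of_neg (by nlinarith) (by nlinarith)
  exact_mod_cast prod_neg

lemma isPathConnected_det_mul_map_conj_sub_one_neg :
    IsPathConnected {N : Matrix (Fin 2) (Fin 2) ℂ | (N * N.map conj - 1).det < 0} := by
  let Φ (q : Matrix (Fin 2) (Fin 2) ℂ × (Fin 2 → ℝ)) : Matrix (Fin 2) (Fin 2) ℂ :=
    q.1 * diagonal (fun i ↦ (q.2 i : ℂ)) * (q.1.map conj)⁻¹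
  have image_eq : Φ '' ({W | W.det ≠ 0} ×ˢ separatedByOne) =
      {N | (N * N.map conj - 1).det < 0} := by
    ext N
    constructor
    · rintro ⟨⟨W, c⟩, ⟨hW, hc⟩, rfl⟩
      exact det_neg_of_consimilar_diagonal hc hW
        (nonsing_inv_mul_cancel_right _ _ (isUnit_det_map_conj hW))
    · intro hN
      obtain ⟨W, c, hc, hW, h⟩ := exists_consimilar_diagonal_of_det_neg hN
      refine ⟨(W, c), ⟨hW, hc⟩, ?_⟩
      simp only [Φ]
      rw [← h, mul_nonsing_inv_cancel_right _ _ (isUnit_det_map_conj hW)]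
  rw [← image_eq]
  exact (isPathConnected_det_ne_zero.prod
    (convex_separatedByOne.isPathConnected ⟨![2, 0], by simp [separatedByOne]⟩)).image'
      (continuousOn_mul_diagonal_mul_inv_map_conj.mono fun _ hq ↦ hq.1)

end TwoByTwo

section ConjBlock

variable {n : Type*}

/-- The block matrix `[[A, conj B], [B, conj A]]` of the pair `p = (A, B)`, whose determinant is the
`D(A, B)` defining `M⁻`. -/
def conjBlock (p : Matrix n n ℂ × Matrix n n ℂ) : Matrix (n ⊕ n) (n ⊕ n) ℂ :=
  fromBlocks p.1 (p.2.map conj) p.2 (p.1.map conj)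

variable [Fintype n] [DecidableEq n]

lemma det_conjBlock_mul (N B : Matrix n n ℂ) :
    (conjBlock (N * B, B)).det = (N * N.map conj - 1).det * Complex.normSq B.det := by
  have factor : conjBlock (N * B, B) =
      fromBlocks N 1 1 (N.map conj) * fromBlocks B 0 0 (B.map conj) := by
    simp [conjBlock, fromBlocks_multiply, Matrix.map_mul]
  rw [factor, det_mul, det_fromBlocks_one₁₂_one₂₁, det_fromBlocks_zero₂₁, ← Complex.mul_conj,
    RingHom.map_det, RingHom.mapMatrix_apply]

lemma det_conjBlock_im (p : Matrix n n ℂ × Matrix n n ℂ) : (conjBlock p).det.im = 0 := by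
  rw [← Complex.conj_eq_iff_im, RingHom.map_det,
    ← det_submatrix_equiv_self (Equiv.sumComm n n) (conjBlock p)]
  congr 1
  ext (i | i) (j | j) <;> simp [conjBlock]

lemma isOpen_setOf_det_conjBlock_neg :
    IsOpen {p : Matrix n n ℂ × Matrix n n ℂ | (conjBlock p).det < 0} := by
  have continuous_det : Continuous fun p : Matrix n n ℂ × Matrix n n ℂ ↦ (conjBlock p).det :=
    Continuous.matrix_det <| continuous_fst.matrix_fromBlocks
      (continuous_snd.matrix_map Complex.continuous_conj) continuous_snd
      (continuous_fst.matrix_map Complex.continuous_conj)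
  simp only [Complex.neg_iff, det_conjBlock_im, and_true]
  exact isOpen_Iio.preimage (Complex.continuous_re.comp continuous_det)

end ConjBlock

lemma isPathConnected_det_conjBlock_neg_of_det_ne_zero {V : Submodule ℂ (Matrix (Fin 2) (Fin 2) ℂ)}
    (hV : ∃ U ∈ V, U.det ≠ 0) :
    IsPathConnected {p : Matrix (Fin 2) (Fin 2) ℂ × Matrix (Fin 2) (Fin 2) ℂ |
      (p.2 ∈ V ∧ p.2.det ≠ 0) ∧ (conjBlock p).det < 0} := by
  have det_neg_iff (N : Matrix (Fin 2) (Fin 2) ℂ) {B : Matrix (Fin 2) (Fin 2) ℂ}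
      (hB : B.det ≠ 0) : (conjBlock (N * B, B)).det < 0 ↔ (N * N.map conj - 1).det < 0 := by
    have normSq_pos : (0 : ℂ) < Complex.normSq B.det := by exact_mod_cast Complex.normSq_pos.2 hB
    rw [det_conjBlock_mul, ← mul_lt_mul_iff_left₀ normSq_pos (b := Matrix.det _), zero_mul]
  have image := (isPathConnected_det_mul_map_conj_sub_one_neg.prod
    (isPathConnected_submodule_det_ne_zero hV)).image
      (f := fun q ↦ (q.1 * q.2, q.2)) (by fun_prop)
  convert image
  ext ⟨A, B⟩
  constructor
  · rintro ⟨⟨hBV, hB⟩, h⟩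
    have A_eq : A * B⁻¹ * B = A := nonsing_inv_mul_cancel_right _ _ hB.isUnit
    exact ⟨(A * B⁻¹, B), ⟨(det_neg_iff _ hB).1 (by rwa [A_eq]), hBV, hB⟩, Prod.ext A_eq rfl⟩
  · rintro ⟨⟨N, B⟩, ⟨hN, hBV, hB⟩, ⟨⟩⟩
    exact ⟨⟨hBV, hB⟩, (det_neg_iff N hB).2 hN⟩

theorem M_minus_pathConnected_general {V : Submodule ℂ (Matrix (Fin 2) (Fin 2) ℂ)}
    (hV : ∃ U ∈ V, U.det ≠ 0) :
    IsPathConnected {p : Matrix (Fin 2) (Fin 2) ℂ × Matrix (Fin 2) (Fin 2) ℂ |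
      p.2 ∈ V ∧ (conjBlock p).det < 0} := by
  obtain ⟨x, hx, joined_x⟩ := isPathConnected_det_conjBlock_neg_of_det_ne_zero hV
  refine ⟨x, ⟨hx.1.1, hx.2⟩, fun {p} ⟨hpV, hp⟩ ↦ ?_⟩
  obtain ⟨U, hUV, hU⟩ := hV
  let γ (t : ℂ) : Matrix (Fin 2) (Fin 2) ℂ × Matrix (Fin 2) (Fin 2) ℂ :=
    (p.1, AffineMap.lineMap p.2 U t)
  have γ_zero : γ 0 = p := by simp only [γ, AffineMap.lineMap_apply_zero]
  have γ_continuous : Continuous γ := by fun_prop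
  have γ_mem (t : ℂ) : (γ t).2 ∈ V := AffineMap.lineMap_mem (Q := V.toAffineSubspace) t hpV hUV
  obtain ⟨ε, ε_pos, γ_ball⟩ := Metric.isOpen_iff.1
    (isOpen_setOf_det_conjBlock_neg.preimage γ_continuous) 0 (by rwa [Set.mem_preimage, γ_zero])
  obtain ⟨t, det_ne_zero, ht⟩ := ((finite_setOf_det_lineMap_eq_zero p.2 hU).countable.dense_compl ℂ
    ).exists_mem_open Metric.isOpen_ball ⟨0, Metric.mem_ball_self ε_pos⟩
  have joined_ball : JoinedIn (Metric.ball 0 ε) t 0 :=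
    (convex_ball 0 ε).isPathConnected ⟨t, ht⟩ |>.joinedIn _ ht _ (Metric.mem_ball_self ε_pos)
  rw [← γ_zero]
  refine JoinedIn.trans (y := γ t) ?_ ?_
  · exact (joined_x ⟨⟨γ_mem t, det_ne_zero⟩, γ_ball ht⟩).mono fun q hq ↦ ⟨hq.1.1, hq.2⟩
  · exact (joined_ball.map γ_continuous).mono <|
      Set.image_subset_iff.2 fun s hs ↦ ⟨γ_mem s, γ_ball hs⟩

/-- The set `M⁻` of pairs `(A,B)` of 2×2 complex matrices with `B` symmetric and
`det [[A, conj B],[B, conj A]] < 0` is path-connected. -/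
theorem M_minus_pathConnected :
    IsPathConnected
      {p : Matrix (Fin 2) (Fin 2) ℂ × Matrix (Fin 2) (Fin 2) ℂ |
        p.2ᵀ = p.2 ∧
        (Matrix.fromBlocks p.1 (p.2.map (starRingEnd ℂ)) p.2
              (p.1.map (starRingEnd ℂ))).det < 0} :=
  M_minus_pathConnected_general
    (V := LinearMap.eqLocus (transposeLinearEquiv (Fin 2) (Fin 2) ℂ ℂ).toLinearMap LinearMap.id)
    ⟨1, transpose_one, by simp⟩
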